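/- For every integer n ≥ 1 and every complex number w with Re w > 0, the derivative satisfies R_n'(w) ≠ 0. -/

import Mathlib

/-- `R n z = ∑_{m=0}^{n} ((n+m)! / (m! (n-m)!)) z^m` for `z ∈ ℂ`. -/
noncomputable def R (n : ℕ) (z : ℂ) : ℂ :=
  ∑ m ∈ Finset.range (n + 1),
    ((Nat.factorial (n + m) : ℂ) / ((Nat.factorial m : ℂ) * (Nat.factorial (n - m) : ℂ))) * z ^ m


/-- The coefficients of `R n`, extended by zero. -/
noncomputable def Rcoef (n m : ℕ) : ℂ :=
  if m ≤ n then (Nat.factorial (n + m) : ℂ) / ((Nat.factorial m : ℂ) * (Nat.factorial (n - m) : ℂ))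
  else 0

/-- `R n` as a polynomial. -/
noncomputable def Rpoly (n : ℕ) : Polynomial ℂ :=
  ∑ m ∈ Finset.range (n + 1), Polynomial.C (Rcoef n m) * Polynomial.X ^ m

theorem Rpoly_coeff (n m : ℕ) : (Rpoly n).coeff m = Rcoef n m := by
  unfold Rpoly
  simp only [Polynomial.finsetSum_coeff, Polynomial.coeff_C_mul, Polynomial.coeff_X_pow]
  simp only [mul_ite, mul_one, mul_zero, Finset.sum_ite_eq, Finset.mem_range]
  unfold Rcoef
  split_ifs <;> first | rfl | omega

theorem Rpoly_eval (n : ℕ) (z : ℂ) : (Rpoly n).eval z = R n z := by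
  unfold Rpoly R
  rw [Polynomial.eval_finset_sum]
  refine Finset.sum_congr rfl fun m hm => ?_
  have : m ≤ n := by simpa [Nat.lt_succ_iff] using hm
  simp [Rcoef, this]

theorem Rcoef_zero (n : ℕ) : Rcoef n 0 = 1 := by
  simp [Rcoef, Nat.factorial_ne_zero]

theorem Rcoef_rec (n m : ℕ) :
    Rcoef (n + 2) (m + 1) = 2 * (2 * n + 3) * Rcoef (n + 1) m + Rcoef n (m + 1) := by
  have hf : ∀ k : ℕ, (Nat.factorial k : ℂ) ≠ 0 := fun k => by
    exact_mod_cast Nat.factorial_ne_zero k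
  have hs : ∀ k : ℕ, (k : ℂ) + 1 ≠ 0 := fun k => by exact_mod_cast Nat.succ_ne_zero k
  unfold Rcoef
  rcases lt_trichotomy m n with h | h | h
  · obtain ⟨k, rfl⟩ := Nat.exists_eq_add_of_lt h
    rw [if_pos (by omega), if_pos (by omega), if_pos (by omega)]
    rw [show m + k + 1 + 2 + (m + 1) = (2 * m + k + 2) + 1 + 1 by ring,
      show m + k + 1 + 2 - (m + 1) = k + 1 + 1 by omega,
      show m + k + 1 + 1 + m = (2 * m + k + 2) by ring,
      show m + k + 1 + 1 - m = k + 1 + 1 by omega,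
      show m + k + 1 + (m + 1) = 2 * m + k + 2 by ring,
      show m + k + 1 - (m + 1) = k by omega]
    simp only [Nat.factorial_succ]
    have h1 := hf m
    have h2 := hf k
    have h3 := hs m
    have h4 := hs k
    have h5 : (k : ℂ) + 1 + 1 ≠ 0 := by exact_mod_cast Nat.succ_ne_zero (k + 1)
    push_cast
    field_simp
    ring
  · subst h
    rw [if_pos (by omega), if_pos (by omega), if_neg (by omega)]
    rw [show m + 2 + (m + 1) = (2 * m + 1) + 1 + 1 by ring,
      show m + 2 - (m + 1) = 1 by omega,
      show m + 1 + m = 2 * m + 1 by ring,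
      show m + 1 - m = 1 by omega]
    rw [Nat.factorial_succ (2 * m + 1 + 1), Nat.factorial_succ (2 * m + 1), Nat.factorial_succ m]
    have h1 := hf m
    have h3 := hs m
    push_cast
    field_simp
    ring
  · rcases Nat.lt_or_ge (n + 1) m with h' | h'
    · rw [if_neg (by omega), if_neg (by omega), if_neg (by omega)]; simp
    · obtain rfl : m = n + 1 := by omega
      rw [if_pos (by omega), if_pos (by omega), if_neg (by omega)]
      rw [show n + 2 + (n + 1 + 1) = (2 * n + 2) + 1 + 1 by ring,
        show n + 2 - (n + 1 + 1) = 0 by omega,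
        show n + 1 + (n + 1) = 2 * n + 2 by ring,
        show n + 1 - (n + 1) = 0 by omega]
      rw [Nat.factorial_succ (2 * n + 2 + 1), Nat.factorial_succ (2 * n + 2),
        Nat.factorial_succ (n + 1)]
      have h1 := hf (n + 1)
      have h5 : (n : ℂ) + 1 + 1 ≠ 0 := by exact_mod_cast Nat.succ_ne_zero (n + 1)
      push_cast
      field_simp
      ring

theorem Rpoly_rec (n : ℕ) :
    Rpoly (n + 2) = Polynomial.C (2 * (2 * n + 3) : ℂ) * (Rpoly (n + 1) * Polynomial.X)
      + Rpoly n := by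
  ext m
  rw [Polynomial.coeff_add, Polynomial.coeff_C_mul]
  cases m with
  | zero => simp [Rpoly_coeff, Rcoef_zero]
  | succ m => rw [Polynomial.coeff_mul_X]; simp only [Rpoly_coeff]; exact Rcoef_rec n m

theorem re_inv_pos {u : ℂ} (hu : 0 < u.re) : 0 < (u⁻¹).re := by
  rw [Complex.inv_re]
  refine div_pos hu (Complex.normSq_pos.2 ?_)
  rintro rfl
  simp at hu

theorem R_ratio (z : ℂ) (hz : 0 < z.re) (n : ℕ) :
    R n z ≠ 0 ∧ 0 < (R (n + 1) z / R n z).re := by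
  induction n with
  | zero =>
    simp [R, Finset.sum_range_succ]
    linarith
  | succ n ih =>
    obtain ⟨h0, h1⟩ := ih
    have hne : R (n + 1) z ≠ 0 := by
      intro h
      simp [h] at h1
    refine ⟨hne, ?_⟩
    have hrec : R (n + 2) z = (2 * (2 * n + 3) : ℂ) * (R (n + 1) z * z) + R n z := by
      simp only [← Rpoly_eval]
      rw [Rpoly_rec]
      simp
    have : R (n + 1 + 1) z / R (n + 1) z
        = ((2 * (2 * n + 3) : ℝ) : ℂ) * z + (R (n + 1) z / R n z)⁻¹ := by
      rw [show n + 1 + 1 = n + 2 from rfl, hrec]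
      push_cast
      field_simp
    rw [this, Complex.add_re, Complex.re_ofReal_mul]
    have := re_inv_pos h1
    positivity

/-- For `n ≥ 1` and `Re w > 0`, the derivative `R_n'(w) ≠ 0`. -/
theorem deriv_Rn_ne_zero_of_re_pos (n : ℕ) (hn : 1 ≤ n) (w : ℂ) (hw : 0 < w.re) :
    deriv (R n) w ≠ 0 := by
  have hfun : R n = fun z => (Rpoly n).eval z := by
    funext z
    exact (Rpoly_eval n z).symm
  have hdeg : 0 < (Rpoly n).degree := by
    have h1 : (Rpoly n).coeff n ≠ 0 := by
      rw [Rpoly_coeff, Rcoef, if_pos le_rfl]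
      simp [Nat.factorial_ne_zero]
    have h2 := Polynomial.le_degree_of_ne_zero h1
    refine lt_of_lt_of_le ?_ h2
    exact_mod_cast hn
  rw [hfun, Polynomial.deriv]
  intro h
  have hd : (Rpoly n).derivative ≠ 0 := by
    intro h0
    have := Polynomial.natDegree_eq_zero_of_derivative_eq_zero h0
    rw [← Polynomial.natDegree_pos_iff_degree_pos] at hdeg
    omega
  have hmem : w ∈ (Rpoly n).derivative.rootSet ℂ := by
    rw [Polynomial.mem_rootSet]
    exact ⟨hd, by simpa using h⟩
  have hconv := Polynomial.rootSet_derivative_subset_convexHull_rootSet hdeg hmem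
  have hsub : (Rpoly n).rootSet ℂ ⊆ {z : ℂ | z.re ≤ 0} := by
    intro z hz
    rw [Polynomial.mem_rootSet] at hz
    by_contra hpos
    have hpos' : 0 < z.re := by simpa using hpos
    apply (R_ratio z hpos' n).1
    rw [← Rpoly_eval]
    simpa using hz.2
  have := convexHull_min hsub (convex_halfSpace_re_le 0) hconv
  exact absurd hw (not_lt.2 this)
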